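/- Equivalence of the two formulations of the Gaussian projected filter: fix a datum y† ∈ R^K and let μ be a probability measure on R^d. Then B G Q P μ = G T Q P μ, where B and T use the datum y†. In particular the iteration μ^G_{j+1} = B_j G Q P μ^G_j is equivalent to μ^G_{j+1} = G T_j Q P μ^G_j. -/

import Mathlib

open MeasureTheory Matrix
open scoped BigOperators ENNReal

noncomputable section

namespace EnKF

/-- Points of `ℝ^n`, with Lebesgue measure as `volume`. -/
abbrev Vec (n : ℕ) := Fin n → ℝ

/-- Euclidean norm of a finitely indexed real vector. -/
def enorm {ι : Type*} [Fintype ι] (v : ι → ℝ) : ℝ := Real.sqrt (∑ i, v i ^ 2)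

/-- The weight function `g(v) = 1 + |v|²` on `ℝ^n`. -/
def gw {n : ℕ} (v : Vec n) : ℝ := 1 + ∑ i, v i ^ 2

/-- The weight function `g(u, y) = 1 + |u|² + |y|²` on `ℝ^d × ℝ^K`. -/
def gw2 {d K : ℕ} (p : Vec d × Vec K) : ℝ := 1 + (∑ i, p.1 i ^ 2) + (∑ j, p.2 j ^ 2)

/-- Weighted total-variation metric with weight `G`:
`d_G(μ₁, μ₂) = sup { |μ₁[f] − μ₂[f]| : f measurable, |f| ≤ G pointwise }`. -/
def dG {E : Type*} [MeasurableSpace E] (G : E → ℝ) (μ₁ μ₂ : Measure E) : ℝ :=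
  ⨆ f : {f : E → ℝ // Measurable f ∧ ∀ v, |f v| ≤ G v},
    |(∫ v, f.1 v ∂μ₁) - ∫ v, f.1 v ∂μ₂|

/-- Loewner order on symmetric matrices: `loe A B ↔ A ≼ B`. -/
def loe {ι : Type*} [Fintype ι] (A B : Matrix ι ι ℝ) : Prop := (B - A).PosSemidef

/-- Mean vector of a measure on `ℝ^n`. -/
def mean {n : ℕ} (μ : Measure (Vec n)) : Vec n := fun i => ∫ v, v i ∂μ

/-- Covariance matrix of a measure on `ℝ^n`. -/
def cov {n : ℕ} (μ : Measure (Vec n)) : Matrix (Fin n) (Fin n) ℝ :=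
  Matrix.of fun i j => ∫ v, (v i - mean μ i) * (v j - mean μ j) ∂μ

/-- Density of the Gaussian `N(m, S)` on `ℝ^n`. -/
def gaussDensity {n : ℕ} (m : Vec n) (S : Matrix (Fin n) (Fin n) ℝ) (x : Vec n) : ℝ :=
  (Real.sqrt ((2 * Real.pi) ^ n * S.det))⁻¹ *
    Real.exp (-(1 / 2) * ((x - m) ⬝ᵥ (S⁻¹ *ᵥ (x - m))))

/-- The (nondegenerate) Gaussian measure `N(m, S)` on `ℝ^n`. -/
def gauss {n : ℕ} (m : Vec n) (S : Matrix (Fin n) (Fin n) ℝ) : Measure (Vec n) :=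
  volume.withDensity fun x => ENNReal.ofReal (gaussDensity m S x)

/-- Gaussian projection `G` on `ℝ^n`: the Gaussian with the same mean and covariance. -/
def Gproj {n : ℕ} (μ : Measure (Vec n)) : Measure (Vec n) := gauss (mean μ) (cov μ)

variable {d K : ℕ}

/-- Mean of the first (state) marginal of a measure on `ℝ^d × ℝ^K`. -/
def meanU (π : Measure (Vec d × Vec K)) : Vec d := fun i => ∫ p, p.1 i ∂π

/-- Mean of the second (data) marginal of a measure on `ℝ^d × ℝ^K`. -/
def meanY (π : Measure (Vec d × Vec K)) : Vec K := fun j => ∫ p, p.2 j ∂π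

/-- Block `C^{uu}` of the covariance of a measure on `ℝ^d × ℝ^K`. -/
def covUU (π : Measure (Vec d × Vec K)) : Matrix (Fin d) (Fin d) ℝ :=
  Matrix.of fun i j => ∫ p, (p.1 i - meanU π i) * (p.1 j - meanU π j) ∂π

/-- Block `C^{uy}` of the covariance of a measure on `ℝ^d × ℝ^K`. -/
def covUY (π : Measure (Vec d × Vec K)) : Matrix (Fin d) (Fin K) ℝ :=
  Matrix.of fun i j => ∫ p, (p.1 i - meanU π i) * (p.2 j - meanY π j) ∂π

/-- Block `C^{yy}` of the covariance of a measure on `ℝ^d × ℝ^K`. -/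
def covYY (π : Measure (Vec d × Vec K)) : Matrix (Fin K) (Fin K) ℝ :=
  Matrix.of fun i j => ∫ p, (p.2 i - meanY π i) * (p.2 j - meanY π j) ∂π

/-- Full covariance matrix of a measure on `ℝ^d × ℝ^K`, in block form. -/
def covBlock (π : Measure (Vec d × Vec K)) : Matrix (Fin d ⊕ Fin K) (Fin d ⊕ Fin K) ℝ :=
  Matrix.fromBlocks (covUU π) (covUY π) (covUY π)ᵀ (covYY π)

/-- Density of a Gaussian on `ℝ^d × ℝ^K` with mean `(mu, my)` and covariance `S`. -/
def jointGaussDensity (mu : Vec d) (my : Vec K)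
    (S : Matrix (Fin d ⊕ Fin K) (Fin d ⊕ Fin K) ℝ) (p : Vec d × Vec K) : ℝ :=
  (Real.sqrt ((2 * Real.pi) ^ (d + K) * S.det))⁻¹ *
    Real.exp (-(1 / 2) *
      (Sum.elim (p.1 - mu) (p.2 - my) ⬝ᵥ (S⁻¹ *ᵥ Sum.elim (p.1 - mu) (p.2 - my))))

/-- Gaussian measure on `ℝ^d × ℝ^K` with mean `(mu, my)` and covariance `S`. -/
def jointGauss (mu : Vec d) (my : Vec K)
    (S : Matrix (Fin d ⊕ Fin K) (Fin d ⊕ Fin K) ℝ) : Measure (Vec d × Vec K) :=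
  volume.withDensity fun p => ENNReal.ofReal (jointGaussDensity mu my S p)

/-- Density of the Gaussian projection of a measure on `ℝ^d × ℝ^K`. -/
def gProjDensity2 (π : Measure (Vec d × Vec K)) : Vec d × Vec K → ℝ :=
  jointGaussDensity (meanU π) (meanY π) (covBlock π)

/-- Gaussian projection on `ℝ^d × ℝ^K`. -/
def Gproj2 (π : Measure (Vec d × Vec K)) : Measure (Vec d × Vec K) :=
  jointGauss (meanU π) (meanY π) (covBlock π)

/-- Prediction operator `P`: the law of `Ψ(V) + ξ`, `V ∼ μ` independent of `ξ ∼ N(0, Σ)`. -/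
def Pop (Psi : Vec d → Vec d) (Sig : Matrix (Fin d) (Fin d) ℝ)
    (μ : Measure (Vec d)) : Measure (Vec d) :=
  (μ.prod (gauss 0 Sig)).map fun p => Psi p.1 + p.2

/-- Lifting operator `Q`: the law of `(U, H(U) + η)`, `U ∼ μ` independent of `η ∼ N(0, Γ)`. -/
def Qop (H : Vec d → Vec K) (Gam : Matrix (Fin K) (Fin K) ℝ)
    (μ : Measure (Vec d)) : Measure (Vec d × Vec K) :=
  (μ.prod (gauss 0 Gam)).map fun p => (p.1, H p.1 + p.2)

/-- Lebesgue density of `Pμ`. -/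
def predDensity (Psi : Vec d → Vec d) (Sig : Matrix (Fin d) (Fin d) ℝ)
    (μ : Measure (Vec d)) (u : Vec d) : ℝ :=
  (Real.sqrt ((2 * Real.pi) ^ d * Sig.det))⁻¹ *
    ∫ v, Real.exp (-(1 / 2) * ((u - Psi v) ⬝ᵥ (Sig⁻¹ *ᵥ (u - Psi v)))) ∂μ

/-- Lebesgue density of `QPμ` on `ℝ^d × ℝ^K`. -/
def qpDensity (Psi : Vec d → Vec d) (Sig : Matrix (Fin d) (Fin d) ℝ)
    (H : Vec d → Vec K) (Gam : Matrix (Fin K) (Fin K) ℝ)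
    (μ : Measure (Vec d)) (p : Vec d × Vec K) : ℝ :=
  predDensity Psi Sig μ p.1 * gaussDensity (H p.1) Gam p.2

/-- Conditioning operator `B` applied to a (joint) density `f` and a datum `y†`:
the measure on `ℝ^d` with density `u ↦ f(u, y†) / ∫ f(U, y†) dU`. -/
def condM (f : Vec d × Vec K → ℝ) (ydag : Vec K) : Measure (Vec d) :=
  volume.withDensity fun u => ENNReal.ofReal (f (u, ydag) / ∫ U, f (U, ydag))

/-- Kalman transport operator `T`: the pushforward of `π` under
`(u, y) ↦ u + C^{uy}(π) C^{yy}(π)⁻¹ (y† − y)`. -/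
def Top (ydag : Vec K) (π : Measure (Vec d × Vec K)) : Measure (Vec d) :=
  π.map fun p => p.1 + covUY π *ᵥ ((covYY π)⁻¹ *ᵥ (ydag - p.2))

/-- Operator (spectral) norm of a real matrix. -/
def opNorm {ι : Type*} [Fintype ι] {κ : Type*} [Fintype κ] (A : Matrix ι κ ℝ) : ℝ :=
  ⨆ x : {x : κ → ℝ // ∑ i, x i ^ 2 ≤ 1}, enorm (A *ᵥ x.1)

/-- Frobenius norm of a real matrix. -/
def frobNorm {ι κ : Type*} [Fintype ι] [Fintype κ] (A : Matrix ι κ ℝ) : ℝ :=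
  Real.sqrt (∑ i, ∑ j, A i j ^ 2)

/-- Weighted norm `|x|_S = |S^{-1/2} x|`, i.e. `√(xᵀ S⁻¹ x)`. -/
def wnorm {n : ℕ} (S : Matrix (Fin n) (Fin n) ℝ) (x : Vec n) : ℝ :=
  Real.sqrt (x ⬝ᵥ (S⁻¹ *ᵥ x))

/-- The set `𝒫_R(ℝ^n)` of probability measures with `|M(μ)| ≤ R` and
`R⁻² I ≼ C(μ) ≼ R² I`. -/
def PR (n : ℕ) (R : ℝ) : Set (Measure (Vec n)) :=
  {μ | IsProbabilityMeasure μ ∧ enorm (mean μ) ≤ R ∧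
    loe ((R ^ 2)⁻¹ • 1) (cov μ) ∧ loe (cov μ) (R ^ 2 • 1)}

/-- The set `𝒫_R(ℝ^d × ℝ^K)`. -/
def PR2 (d K : ℕ) (R : ℝ) : Set (Measure (Vec d × Vec K)) :=
  {π | IsProbabilityMeasure π ∧ enorm (Sum.elim (meanU π) (meanY π)) ≤ R ∧
    loe ((R ^ 2)⁻¹ • 1) (covBlock π) ∧ loe (covBlock π) (R ^ 2 • 1)}

/-- Smallest eigenvalue of a symmetric matrix (Rayleigh quotient form). -/
def lambdaMin {ι : Type*} [Fintype ι] (A : Matrix ι ι ℝ) : ℝ :=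
  ⨅ x : {x : ι → ℝ // ∑ i, x i ^ 2 = 1}, x.1 ⬝ᵥ (A *ᵥ x.1)

/-- Kullback–Leibler divergence `KL(μ₁ ‖ μ₂) = ∫ (dμ₁/dμ₂) log (dμ₁/dμ₂) dμ₂`. -/
def kl {E : Type*} [MeasurableSpace E] (μ₁ μ₂ : Measure E) : ℝ :=
  ∫ v, ((μ₁.rnDeriv μ₂ v).toReal * Real.log (μ₁.rnDeriv μ₂ v).toReal) ∂μ₂


theorem gaussDensity_nonneg {n : ℕ} (m : Vec n) (S : Matrix (Fin n) (Fin n) ℝ) (x : Vec n) :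
    0 ≤ gaussDensity m S x := by
  unfold gaussDensity; positivity

@[fun_prop]
theorem continuous_gaussDensity {n : ℕ} (m : Vec n) (S : Matrix (Fin n) (Fin n) ℝ) :
    Continuous (gaussDensity m S) := by
  unfold gaussDensity; fun_prop

theorem gaussDensity_zero_one {n : ℕ} (x : Vec n) :
    gaussDensity 0 1 x = ∏ i, ProbabilityTheory.gaussianPDFReal 0 1 (x i) := by
  simp only [gaussDensity, ProbabilityTheory.gaussianPDFReal, Finset.prod_mul_distrib,
    ← Real.exp_sum, Finset.prod_const, Finset.card_univ, Fintype.card_fin]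
  congr 1
  · rw [Matrix.det_one, mul_one, inv_pow, NNReal.coe_one, mul_one,
      Real.sqrt_eq_rpow, Real.sqrt_eq_rpow, ← Real.rpow_mul_natCast (by positivity),
      ← Real.rpow_natCast_mul (by positivity), mul_comm (n : ℝ)]
  · congr 1
    simp only [sub_zero, inv_one, Matrix.one_mulVec, dotProduct, Finset.mul_sum, NNReal.coe_one]
    exact Finset.sum_congr rfl fun i _ => by ring

/-- The standard Gaussian on `ℝ^n` is the product of standard real Gaussians. -/
theorem gauss_zero_one (n : ℕ) :
    gauss (0 : Vec n) 1 = Measure.pi fun _ => ProbabilityTheory.gaussianReal 0 1 := by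
  refine (Measure.pi_eq fun s hs => ?_).symm
  rw [gauss, withDensity_apply _ (MeasurableSet.univ_pi hs), volume_pi,
    Measure.restrict_pi_pi]
  simp_rw [gaussDensity_zero_one]
  rw [← ofReal_integral_eq_lintegral_ofReal, integral_fintype_prod_eq_prod,
    ENNReal.ofReal_prod_of_nonneg]
  · refine Finset.prod_congr rfl fun i _ => ?_
    rw [ProbabilityTheory.gaussianReal_apply_eq_integral _ one_ne_zero]
  · exact fun i _ => integral_nonneg fun x => ProbabilityTheory.gaussianPDFReal_nonneg _ _ _
  · exact Integrable.fintype_prod fun i =>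
      (ProbabilityTheory.integrable_gaussianPDFReal 0 1).restrict
  · exact ae_of_all _ fun x => Finset.prod_nonneg fun i _ =>
      ProbabilityTheory.gaussianPDFReal_nonneg _ _ _

open scoped MatrixOrder Matrix.Norms.L2Operator in
theorem exists_mul_transpose_of_posDef {n : ℕ} {S : Matrix (Fin n) (Fin n) ℝ} (hS : S.PosDef) :
    ∃ B : Matrix (Fin n) (Fin n) ℝ, S = B * Bᵀ ∧ B.det ≠ 0 := by
  obtain ⟨B, hB⟩ := CStarAlgebra.nonneg_iff_eq_star_mul_self.mp hS.posSemidef.nonneg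
  refine ⟨Bᵀ, ?_, fun h => ?_⟩
  · rw [hB, star_eq_conjTranspose, conjTranspose_eq_transpose_of_trivial, transpose_transpose]
  have := hS.det_pos
  rw [hB] at this
  simp_all

theorem gaussDensity_mulVec {n : ℕ} {B : Matrix (Fin n) (Fin n) ℝ} (hB : B.det ≠ 0) (x : Vec n) :
    gaussDensity 0 1 x = |B.det| * gaussDensity 0 (B * Bᵀ) (B *ᵥ x) := by
  have hu : IsUnit B.det := hB.isUnit
  have hq : (B *ᵥ x) ⬝ᵥ ((B * Bᵀ)⁻¹ *ᵥ (B *ᵥ x)) = x ⬝ᵥ x := by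
    rw [Matrix.mul_inv_rev, ← Matrix.mulVec_mulVec, Matrix.mulVec_mulVec x B⁻¹ B,
      Matrix.nonsing_inv_mul _ hu, Matrix.one_mulVec, ← Matrix.transpose_nonsing_inv,
      Matrix.dotProduct_mulVec, Matrix.vecMul_transpose, Matrix.mulVec_mulVec,
      Matrix.nonsing_inv_mul _ hu, Matrix.one_mulVec]
  simp only [gaussDensity, sub_zero, hq, inv_one, Matrix.one_mulVec, Matrix.det_one, mul_one,
    Matrix.det_mul, Matrix.det_transpose]
  rw [Real.sqrt_mul (by positivity), Real.sqrt_mul_self_eq_abs, mul_inv, ← mul_assoc]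
  congr 1
  have : |B.det| ≠ 0 := by positivity
  field_simp

/-- A nondegenerate centred Gaussian is a linear image of the standard one. -/
theorem gauss_zero_mul_transpose {n : ℕ} {B : Matrix (Fin n) (Fin n) ℝ} (hB : B.det ≠ 0) :
    gauss 0 (B * Bᵀ) = (gauss 0 1).map fun x => B *ᵥ x := by
  have hm : Measurable fun x : Vec n => B *ᵥ x := by fun_prop
  ext s hs
  have hpos : 0 < |B.det| := abs_pos.mpr hB
  rw [Measure.map_apply hm hs, gauss, gauss, withDensity_apply _ hs, withDensity_apply _ (hm hs)]
  have hvol : (volume : Measure (Vec n)) =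
      ENNReal.ofReal |B.det| • Measure.map (fun x : Vec n => B *ᵥ x) volume := by
    have := Real.map_matrix_volume_pi_eq_smul_volume_pi hB
    change Measure.map (fun x : Vec n => B *ᵥ x) volume = _ at this
    rw [this, smul_smul, ← ENNReal.ofReal_mul hpos.le, ← abs_mul, mul_inv_cancel₀ hB]
    simp
  simp_rw [gaussDensity_mulVec hB, ENNReal.ofReal_mul hpos.le]
  have hf : Measurable fun x => ENNReal.ofReal (gaussDensity 0 (B * Bᵀ) x) := by fun_prop
  conv_lhs => rw [hvol]
  rw [Measure.restrict_smul, lintegral_smul_measure, setLIntegral_map hs hf hm,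
    smul_eq_mul]
  exact (lintegral_const_mul _ (hf.comp hm)).symm

theorem isProbabilityMeasure_gauss_zero {n : ℕ} {S : Matrix (Fin n) (Fin n) ℝ} (hS : S.PosDef) :
    IsProbabilityMeasure (gauss 0 S) := by
  obtain ⟨B, rfl, hB⟩ := exists_mul_transpose_of_posDef hS
  rw [gauss_zero_mul_transpose hB, gauss_zero_one]
  exact Measure.isProbabilityMeasure_map (by fun_prop)

theorem memLp_two_gauss_zero {n : ℕ} {S : Matrix (Fin n) (Fin n) ℝ} (hS : S.PosDef) (i : Fin n) :
    MemLp (fun x : Vec n => x i) 2 (gauss 0 S) := by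
  obtain ⟨B, rfl, hB⟩ := exists_mul_transpose_of_posDef hS
  have hm : Measurable fun x : Vec n => x i := measurable_pi_apply i
  rw [gauss_zero_mul_transpose hB, gauss_zero_one,
    memLp_map_measure_iff hm.aestronglyMeasurable (by fun_prop)]
  refine memLp_finsetSum Finset.univ fun j _ => MemLp.const_mul ?_ (B i j)
  exact (ProbabilityTheory.memLp_id_gaussianReal 2).comp_measurePreserving
    (measurePreserving_eval (fun _ => ProbabilityTheory.gaussianReal 0 1) j)

theorem integral_gaussDensity {n : ℕ} (m : Vec n) {S : Matrix (Fin n) (Fin n) ℝ}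
    (hS : S.PosDef) : ∫ x, gaussDensity m S x = 1 := by
  have := isProbabilityMeasure_gauss_zero hS
  have hshift : ∀ x, gaussDensity m S x = gaussDensity 0 S (x - m) := by simp [gaussDensity]
  simp_rw [hshift]
  rw [integral_sub_right_eq_self (gaussDensity 0 S) m,
    integral_eq_lintegral_of_nonneg_ae (ae_of_all _ (gaussDensity_nonneg 0 S)) (by fun_prop)]
  have h1 : (gauss 0 S) Set.univ = 1 := measure_univ
  rw [gauss, withDensity_apply _ MeasurableSet.univ, Measure.restrict_univ] at h1
  simp [h1]

theorem gauss_absolutelyContinuous {n : ℕ} (m : Vec n) (S : Matrix (Fin n) (Fin n) ℝ) :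
    gauss m S ≪ volume := withDensity_absolutelyContinuous _ _

theorem volume_hyperplane {n : ℕ} {x : Vec n} (hx : x ≠ 0) (m : Vec n) :
    volume {v : Vec n | x ⬝ᵥ (v - m) = 0} = 0 := by
  let L : Vec n →ₗ[ℝ] ℝ := dotProductBilin ℝ ℝ x
  have hL : L.ker ≠ ⊤ := fun h => hx <| by
    rw [← dotProduct_self_eq_zero]
    exact LinearMap.congr_fun (LinearMap.ker_eq_top.mp h) x
  have h0 := Measure.addHaar_submodule (volume : Measure (Vec n)) L.ker hL
  rwa [← (measurePreserving_sub_right volume m).measure_preimage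
    L.ker.closed_of_finiteDimensional.measurableSet.nullMeasurableSet] at h0

theorem integral_sq_dotProduct {Ω : Type*} [MeasurableSpace Ω] {P : Measure Ω} {n : ℕ}
    {X : Fin n → Ω → ℝ} (hX : ∀ i, MemLp (X i) 2 P) (x : Vec n) :
    ∫ ω, (∑ i, x i * X i ω) ^ 2 ∂P =
      x ⬝ᵥ ((Matrix.of fun i j => ∫ ω, X i ω * X j ω ∂P) *ᵥ x) := by
  have hintegrable : ∀ i j, Integrable (fun ω => X i ω * X j ω) P :=
    fun i j => (hX i).integrable_mul (hX j)
  have hexp : ∀ ω, (∑ i, x i * X i ω) ^ 2 = ∑ i, ∑ j, x i * x j * (X i ω * X j ω) := fun ω => by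
    rw [sq, Finset.sum_mul_sum]
    exact Finset.sum_congr rfl fun i _ => Finset.sum_congr rfl fun j _ => by ring
  simp_rw [hexp]
  rw [integral_finsetSum _ fun i _ => integrable_finsetSum _ fun j _ => (hintegrable i j).const_mul _]
  simp_rw [integral_finsetSum _ fun j _ => (hintegrable _ j).const_mul _, integral_const_mul]
  simp only [dotProduct, mulVec, Finset.mul_sum, Matrix.of_apply]
  exact Finset.sum_congr rfl fun i _ => Finset.sum_congr rfl fun j _ => by ring

/-- A law with a Lebesgue density and finite second moments has nondegenerate covariance. -/
theorem posDef_cov {n : ℕ} (ν : Measure (Vec n)) [IsProbabilityMeasure ν] (hac : ν ≪ volume)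
    (hL : ∀ i, MemLp (fun v : Vec n => v i) 2 ν) : (cov ν).PosDef := by
  have hX : ∀ i, MemLp (fun v : Vec n => v i - mean ν i) 2 ν :=
    fun i => (hL i).sub (memLp_const _)
  refine Matrix.PosDef.of_dotProduct_mulVec_pos ?_ fun x hx => ?_
  · ext i j
    simp [cov, mul_comm]
  have hintegrable : Integrable (fun v : Vec n => (∑ i, x i * (v i - mean ν i)) ^ 2) ν :=
    (memLp_finsetSum Finset.univ fun i _ => (hX i).const_mul (x i)).integrable_sq
  have key : 0 < ∫ v, (∑ i, x i * (v i - mean ν i)) ^ 2 ∂ν := by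
    refine lt_of_le_of_ne (integral_nonneg fun v => sq_nonneg _) fun h => ?_
    have hz := (integral_eq_zero_iff_of_nonneg (fun v => sq_nonneg _) hintegrable).mp h.symm
    have hn : ∀ᵐ v ∂ν, x ⬝ᵥ (v - mean ν) ≠ 0 := by
      simpa only [ae_iff, ne_eq, not_not] using hac (volume_hyperplane hx (mean ν))
    obtain ⟨v, hv, hne⟩ := (hz.and hn).exists
    exact hne (by simpa [dotProduct] using hv)
  rw [integral_sq_dotProduct hX x] at key
  simpa [cov] using key

theorem posDef_of_loe {n : ℕ} {c : ℝ} (hc : 0 < c) {S : Matrix (Fin n) (Fin n) ℝ}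
    (h : loe (c • 1) S) : S.PosDef := by
  have := (Matrix.PosDef.one.smul hc).add_posSemidef h
  simpa using this

theorem memLp_two_add_noise {E : Type*} [MeasurableSpace E] {n : ℕ} (ν : Measure E)
    [IsProbabilityMeasure ν] {F : E → Vec n} (hF : Measurable F) {c : ℝ}
    (hb : ∀ v, enorm (F v) ≤ c) {S : Matrix (Fin n) (Fin n) ℝ} (hS : S.PosDef) (i : Fin n) :
    MemLp (fun p : E × Vec n => F p.1 i + p.2 i) 2 (ν.prod (gauss 0 S)) := by
  have := isProbabilityMeasure_gauss_zero hS
  have hm : Measurable fun p : E × Vec n => F p.1 i :=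
    (measurable_pi_apply i).comp (hF.comp measurable_fst)
  refine MemLp.add (MemLp.of_bound hm.aestronglyMeasurable c (ae_of_all _ fun p => ?_)) ?_
  · refine le_trans ?_ (hb p.1)
    rw [Real.norm_eq_abs, enorm]
    exact Real.abs_le_sqrt (Finset.single_le_sum (f := fun j => F p.1 j ^ 2)
      (fun j _ => sq_nonneg _) (Finset.mem_univ i))
  · exact (memLp_two_gauss_zero hS i).comp_measurePreserving measurePreserving_snd

/-- The shear `(u, y) ↦ (u, F u + y)` preserves a product with Lebesgue measure. -/
theorem measurePreserving_shear {E : Type*} [MeasurableSpace E] {n : ℕ} (ν : Measure E) [SFinite ν]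
    {F : E → Vec n} (hF : Measurable F) :
    MeasurePreserving (fun p : E × Vec n => (p.1, F p.1 + p.2))
      (ν.prod volume) (ν.prod volume) :=
  (MeasurePreserving.id ν).skew_product (g := fun u y => F u + y) (by fun_prop)
    (ae_of_all _ fun u => map_add_left_eq_self volume (F u))

section Operators

variable {Psi : Vec d → Vec d} {H : Vec d → Vec K}
  {Sig : Matrix (Fin d) (Fin d) ℝ} {Gam : Matrix (Fin K) (Fin K) ℝ} {ν : Measure (Vec d)}

theorem isProbabilityMeasure_Pop [IsProbabilityMeasure ν] (hPsi : Measurable Psi)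
    (hSig : Sig.PosDef) : IsProbabilityMeasure (Pop Psi Sig ν) := by
  have := isProbabilityMeasure_gauss_zero hSig
  exact Measure.isProbabilityMeasure_map (by fun_prop)

theorem isProbabilityMeasure_Qop [IsProbabilityMeasure ν] (hH : Measurable H)
    (hGam : Gam.PosDef) : IsProbabilityMeasure (Qop H Gam ν) := by
  have := isProbabilityMeasure_gauss_zero hGam
  exact Measure.isProbabilityMeasure_map (by fun_prop)

theorem Pop_absolutelyContinuous [IsProbabilityMeasure ν] (hPsi : Measurable Psi)
    (hSig : Sig.PosDef) : Pop Psi Sig ν ≪ volume := by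
  have := isProbabilityMeasure_gauss_zero hSig
  refine ((Measure.AbsolutelyContinuous.rfl.prod
    (gauss_absolutelyContinuous 0 Sig)).map (by fun_prop)).trans ?_
  exact (Measure.quasiMeasurePreserving_snd.comp
    (measurePreserving_shear ν hPsi).quasiMeasurePreserving).absolutelyContinuous

theorem Qop_absolutelyContinuous [IsProbabilityMeasure ν] (hν : ν ≪ volume) (hH : Measurable H)
    (hGam : Gam.PosDef) : Qop H Gam ν ≪ volume := by
  have := isProbabilityMeasure_gauss_zero hGam
  exact ((hν.prod (gauss_absolutelyContinuous 0 Gam)).map (by fun_prop)).trans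
    (measurePreserving_shear volume hH).quasiMeasurePreserving.absolutelyContinuous

theorem memLp_two_Pop [IsProbabilityMeasure ν] (hPsi : Measurable Psi) {c : ℝ}
    (hb : ∀ v, enorm (Psi v) ≤ c) (hSig : Sig.PosDef) (i : Fin d) :
    MemLp (fun u : Vec d => u i) 2 (Pop Psi Sig ν) := by
  have hm : Measurable fun u : Vec d => u i := measurable_pi_apply i
  rw [Pop, memLp_map_measure_iff hm.aestronglyMeasurable (by fun_prop)]
  exact memLp_two_add_noise ν hPsi hb hSig i

theorem memLp_two_fst_Qop [IsProbabilityMeasure ν] (hH : Measurable H) (hGam : Gam.PosDef)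
    {i : Fin d} (hν : MemLp (fun u : Vec d => u i) 2 ν) :
    MemLp (fun p : Vec d × Vec K => p.1 i) 2 (Qop H Gam ν) := by
  have := isProbabilityMeasure_gauss_zero hGam
  have hm : Measurable fun p : Vec d × Vec K => p.1 i := by fun_prop
  rw [Qop, memLp_map_measure_iff hm.aestronglyMeasurable (by fun_prop)]
  exact hν.comp_measurePreserving measurePreserving_fst

theorem memLp_two_snd_Qop [IsProbabilityMeasure ν] (hH : Measurable H) {c : ℝ}
    (hb : ∀ v, enorm (H v) ≤ c) (hGam : Gam.PosDef) (j : Fin K) :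
    MemLp (fun p : Vec d × Vec K => p.2 j) 2 (Qop H Gam ν) := by
  have hm : Measurable fun p : Vec d × Vec K => p.2 j := by fun_prop
  rw [Qop, memLp_map_measure_iff hm.aestronglyMeasurable (by fun_prop)]
  exact memLp_two_add_noise ν hH hb hGam j

end Operators

theorem integral_mul_sum {Ω ι : Type*} [MeasurableSpace Ω] [Fintype ι] {P : Measure Ω}
    {W : Ω → ℝ} {Y : ι → Ω → ℝ} (hW : MemLp W 2 P) (hY : ∀ j, MemLp (Y j) 2 P) (c : ι → ℝ) :
    ∫ ω, W ω * (∑ j, c j * Y j ω) ∂P = ∑ j, c j * ∫ ω, W ω * Y j ω ∂P := by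
  have hintegrable : ∀ j, Integrable (fun ω => W ω * Y j ω) P := fun j => hW.integrable_mul (hY j)
  simp_rw [Finset.mul_sum, mul_left_comm _ (c _)]
  rw [integral_finsetSum _ fun j _ => (hintegrable j).const_mul _]
  simp_rw [integral_const_mul]

theorem integral_sub_mul_sub {Ω : Type*} [MeasurableSpace Ω] {P : Measure Ω}
    {X Z U V : Ω → ℝ} (hX : MemLp X 2 P) (hZ : MemLp Z 2 P) (hU : MemLp U 2 P)
    (hV : MemLp V 2 P) :
    ∫ ω, (X ω - Z ω) * (U ω - V ω) ∂P =
      ∫ ω, X ω * U ω ∂P - ∫ ω, X ω * V ω ∂P - ∫ ω, U ω * Z ω ∂P + ∫ ω, Z ω * V ω ∂P := by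
  have hXX : Integrable (fun ω => X ω * U ω) P := hX.integrable_mul hU
  have hXZ : Integrable (fun ω => X ω * V ω) P := hX.integrable_mul hV
  have hZX : Integrable (fun ω => U ω * Z ω) P := hU.integrable_mul hZ
  have hZZ : Integrable (fun ω => Z ω * V ω) P := hZ.integrable_mul hV
  rw [← integral_sub hXX hXZ, ← integral_sub (by exact hXX.sub hXZ) hZX,
    ← integral_add (by exact (hXX.sub hXZ).sub hZX) hZZ]
  exact integral_congr_ae (ae_of_all _ fun ω => by ring)

theorem measurable_transport (M : Matrix (Fin d) (Fin K) ℝ) (N : Matrix (Fin K) (Fin K) ℝ)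
    (ydag : Vec K) :
    Measurable fun p : Vec d × Vec K => p.1 + M *ᵥ (N *ᵥ (ydag - p.2)) := by
  fun_prop

theorem Top_absolutelyContinuous {π : Measure (Vec d × Vec K)} (hac : π ≪ volume) (ydag : Vec K) :
    Top ydag π ≪ volume := by
  refine (hac.map (measurable_transport _ _ ydag)).trans ?_
  have h := (measurePreserving_shear (volume : Measure (Vec K))
    (F := fun y => covUY π *ᵥ ((covYY π)⁻¹ *ᵥ (ydag - y))) (by fun_prop)).comp
      Measure.measurePreserving_swap
  have hfun : (fun p : Vec d × Vec K => p.1 + covUY π *ᵥ ((covYY π)⁻¹ *ᵥ (ydag - p.2))) =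
      fun p => covUY π *ᵥ ((covYY π)⁻¹ *ᵥ (ydag - p.2)) + p.1 := funext fun p => add_comm _ _
  rw [hfun]
  exact (Measure.quasiMeasurePreserving_snd.comp
    h.quasiMeasurePreserving).absolutelyContinuous

section Transport

variable {π : Measure (Vec d × Vec K)} [IsProbabilityMeasure π]

theorem posDef_covYY (hac : π ≪ volume)
    (hy : ∀ j, MemLp (fun p : Vec d × Vec K => p.2 j) 2 π) : (covYY π).PosDef := by
  have hmean : mean (π.map Prod.snd) = meanY π := by
    funext j
    exact integral_map measurable_snd.aemeasurable
      (measurable_pi_apply j).aestronglyMeasurable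
  have hcov : cov (π.map Prod.snd) = covYY π := by
    ext i j
    simp only [cov, covYY, Matrix.of_apply, hmean]
    exact integral_map measurable_snd.aemeasurable (by fun_prop)
  have := Measure.isProbabilityMeasure_map (μ := π) measurable_snd.aemeasurable
  rw [← hcov]
  refine posDef_cov _ ((hac.map measurable_snd).trans
    Measure.quasiMeasurePreserving_snd.absolutelyContinuous) fun j => ?_
  have hm : Measurable fun y : Vec K => y j := measurable_pi_apply j
  rw [memLp_map_measure_iff hm.aestronglyMeasurable (by fun_prop)]
  exact hy j

theorem mean_Top (hu : ∀ i, MemLp (fun p : Vec d × Vec K => p.1 i) 2 π)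
    (hy : ∀ j, MemLp (fun p : Vec d × Vec K => p.2 j) 2 π) (ydag : Vec K) :
    mean (Top ydag π) = meanU π + covUY π *ᵥ ((covYY π)⁻¹ *ᵥ (ydag - meanY π)) := by
  have hui := fun i => (hu i).integrable one_le_two
  have hyi := fun j => (hy j).integrable one_le_two
  funext i
  have hm : Measurable fun u : Vec d => u i := measurable_pi_apply i
  rw [mean, Top, integral_map (measurable_transport _ _ ydag).aemeasurable
    hm.aestronglyMeasurable]
  simp only [Matrix.mulVec_mulVec, Pi.add_apply, mulVec, dotProduct, Pi.sub_apply]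
  have hterm : ∀ j, Integrable (fun p : Vec d × Vec K =>
      (covUY π * (covYY π)⁻¹) i j * (ydag j - p.2 j)) π :=
    fun j => ((integrable_const _).sub (hyi j)).const_mul _
  rw [integral_add (hui i) (integrable_finsetSum _ fun j _ => hterm j),
    integral_finsetSum _ fun j _ => hterm j]
  simp_rw [integral_const_mul, integral_sub (integrable_const _) (hyi _)]
  simp [meanU, meanY]

theorem cov_Top (hu : ∀ i, MemLp (fun p : Vec d × Vec K => p.1 i) 2 π)
    (hy : ∀ j, MemLp (fun p : Vec d × Vec K => p.2 j) 2 π) (hD : (covYY π).PosDef)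
    (ydag : Vec K) :
    cov (Top ydag π) = covUU π - covUY π * (covYY π)⁻¹ * (covUY π)ᵀ := by
  set G := covUY π * (covYY π)⁻¹ with hG
  have hX : ∀ i, MemLp (fun p : Vec d × Vec K => p.1 i - meanU π i) 2 π :=
    fun i => (hu i).sub (memLp_const _)
  have hY : ∀ j, MemLp (fun p : Vec d × Vec K => p.2 j - meanY π j) 2 π :=
    fun j => (hy j).sub (memLp_const _)
  have hZ : ∀ i, MemLp (fun p : Vec d × Vec K => ∑ j, G i j * (p.2 j - meanY π j)) 2 π :=
    fun i => memLp_finsetSum Finset.univ fun j _ => (hY j).const_mul _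
  have hXZ : ∀ i k, ∫ p, (p.1 i - meanU π i) * (∑ j, G k j * (p.2 j - meanY π j)) ∂π =
      (covUY π * Gᵀ) i k := fun i k => by
    rw [integral_mul_sum (hX i) hY]
    exact Finset.sum_congr rfl fun j _ => mul_comm _ _
  have hYZ : ∀ k j, ∫ p, (∑ l, G k l * (p.2 l - meanY π l)) * (p.2 j - meanY π j) ∂π =
      (covYY π * Gᵀ) j k := fun k j => by
    simp_rw [mul_comm _ (_ - meanY π j)]
    rw [integral_mul_sum (hY j) hY]
    exact Finset.sum_congr rfl fun l _ => mul_comm _ _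
  have hZZ : ∀ i k, ∫ p, (∑ j, G k j * (p.2 j - meanY π j)) *
      (∑ j, G i j * (p.2 j - meanY π j)) ∂π = (G * (covYY π * Gᵀ)) i k := fun i k => by
    rw [integral_mul_sum (hZ k) hY]
    exact Finset.sum_congr rfl fun j _ => by rw [hYZ]
  have hDG : covYY π * Gᵀ = (covUY π)ᵀ := by
    have hsymm : (covYY π)ᵀ = covYY π := by simpa using hD.isHermitian.eq
    rw [hG, transpose_mul, transpose_nonsing_inv, hsymm, ← Matrix.mul_assoc,
      Matrix.mul_nonsing_inv _ hD.det_pos.ne'.isUnit, Matrix.one_mul]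
  have hBG : covUY π * Gᵀ = G * (covUY π)ᵀ := by
    have hsymm : (covYY π)ᵀ = covYY π := by simpa using hD.isHermitian.eq
    rw [hG, transpose_mul, transpose_nonsing_inv, hsymm, Matrix.mul_assoc]
  ext i k
  have hdiff : ∀ (p : Vec d × Vec K) i,
      (p.1 + covUY π *ᵥ ((covYY π)⁻¹ *ᵥ (ydag - p.2))) i - mean (Top ydag π) i =
        (p.1 i - meanU π i) - ∑ j, G i j * (p.2 j - meanY π j) := fun p i => by
    rw [mean_Top hu hy]
    simp only [Matrix.mulVec_mulVec, ← hG, Pi.add_apply, mulVec, dotProduct, Pi.sub_apply,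
      mul_sub, Finset.sum_sub_distrib]
    ring
  have hmap : cov (Top ydag π) i k = ∫ p, ((p.1 i - meanU π i) -
      ∑ j, G i j * (p.2 j - meanY π j)) * ((p.1 k - meanU π k) -
        ∑ j, G k j * (p.2 j - meanY π j)) ∂π := by
    simp_rw [← hdiff]
    exact integral_map (measurable_transport _ _ ydag).aemeasurable
      (Continuous.aestronglyMeasurable (by fun_prop))
  have hsymmBG : (G * (covUY π)ᵀ) k i = (G * (covUY π)ᵀ) i k := by
    conv_lhs => rw [← hBG]
    rw [← transpose_apply (_ * _), transpose_mul, transpose_transpose]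
  rw [hmap, integral_sub_mul_sub (hX i) (hZ i) (hX k) (hZ k), hXZ, hXZ, hBG, hsymmBG,
    hZZ k i, hDG, hsymmBG, Matrix.sub_apply, sub_add_cancel]
  rfl

end Transport

theorem det_fromBlocks_schur {A : Matrix (Fin d) (Fin d) ℝ} {B : Matrix (Fin d) (Fin K) ℝ}
    {D : Matrix (Fin K) (Fin K) ℝ} (hD : D.PosDef) :
    (fromBlocks A B Bᵀ D).det = D.det * (A - B * D⁻¹ * Bᵀ).det := by
  have := hD.isUnit.invertible
  rw [det_fromBlocks₂₂, invOf_eq_nonsing_inv]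

/-- Completing the square: a block quadratic form splits through the Schur complement. -/
theorem dotProduct_inv_fromBlocks {A : Matrix (Fin d) (Fin d) ℝ} {B : Matrix (Fin d) (Fin K) ℝ}
    {D : Matrix (Fin K) (Fin K) ℝ} (hD : D.PosDef) (hS : (A - B * D⁻¹ * Bᵀ).PosDef)
    (z : Vec d) (w : Vec K) :
    Sum.elim z w ⬝ᵥ ((fromBlocks A B Bᵀ D)⁻¹ *ᵥ Sum.elim z w) =
      (z - B *ᵥ (D⁻¹ *ᵥ w)) ⬝ᵥ ((A - B * D⁻¹ * Bᵀ)⁻¹ *ᵥ (z - B *ᵥ (D⁻¹ *ᵥ w))) +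
        w ⬝ᵥ (D⁻¹ *ᵥ w) := by
  set S := A - B * D⁻¹ * Bᵀ with hSdef
  have hDu : IsUnit D.det := hD.det_pos.ne'.isUnit
  have hSu : IsUnit S.det := hS.det_pos.ne'.isUnit
  have hCu : IsUnit (fromBlocks A B Bᵀ D).det := by
    rw [det_fromBlocks_schur hD]
    exact hDu.mul hSu
  have hDs : (D⁻¹)ᵀ = D⁻¹ := by simpa using hD.inv.isHermitian.eq
  set a := S⁻¹ *ᵥ (z - B *ᵥ (D⁻¹ *ᵥ w)) with ha
  have hSa : A *ᵥ a - B *ᵥ (D⁻¹ *ᵥ (Bᵀ *ᵥ a)) = z - B *ᵥ (D⁻¹ *ᵥ w) := by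
    have hSmul : S *ᵥ a = A *ᵥ a - B *ᵥ (D⁻¹ *ᵥ (Bᵀ *ᵥ a)) := by
      rw [hSdef, sub_mulVec, Matrix.mul_assoc, ← mulVec_mulVec, ← mulVec_mulVec]
    rw [← hSmul, ha, mulVec_mulVec _ S, Matrix.mul_nonsing_inv _ hSu, one_mulVec]
  have hsol : fromBlocks A B Bᵀ D *ᵥ Sum.elim a (D⁻¹ *ᵥ w - D⁻¹ *ᵥ (Bᵀ *ᵥ a)) =
      Sum.elim z w := by
    rw [fromBlocks_mulVec]
    congr 1
    · simp only [Sum.elim_comp_inl, Sum.elim_comp_inr, mulVec_sub]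
      rw [add_sub_left_comm, hSa, add_sub_cancel]
    · simp only [Sum.elim_comp_inl, Sum.elim_comp_inr, mulVec_sub]
      rw [mulVec_mulVec _ D, mulVec_mulVec _ D, Matrix.mul_nonsing_inv _ hDu, one_mulVec,
        one_mulVec, add_sub_cancel]
  have hinv : (fromBlocks A B Bᵀ D)⁻¹ *ᵥ Sum.elim z w =
      Sum.elim a (D⁻¹ *ᵥ w - D⁻¹ *ᵥ (Bᵀ *ᵥ a)) := by
    rw [← hsol, mulVec_mulVec, Matrix.nonsing_inv_mul _ hCu, one_mulVec]
  have hcross : w ⬝ᵥ (D⁻¹ *ᵥ (Bᵀ *ᵥ a)) = (B *ᵥ (D⁻¹ *ᵥ w)) ⬝ᵥ a := by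
    rw [dotProduct_mulVec, dotProduct_mulVec, vecMul_transpose, ← mulVec_transpose, hDs]
  rw [hinv, sumElim_dotProduct_sumElim, dotProduct_sub, hcross, sub_dotProduct]
  ring

/-- Conditioning a nondegenerate joint Gaussian on `y` gives the Gaussian with the Kalman
mean and Schur-complement covariance. -/
theorem condM_jointGaussDensity {A : Matrix (Fin d) (Fin d) ℝ} {B : Matrix (Fin d) (Fin K) ℝ}
    {D : Matrix (Fin K) (Fin K) ℝ} (hD : D.PosDef) (hS : (A - B * D⁻¹ * Bᵀ).PosDef)
    (mu : Vec d) (my y : Vec K) :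
    condM (jointGaussDensity mu my (fromBlocks A B Bᵀ D)) y =
      gauss (mu + B *ᵥ (D⁻¹ *ᵥ (y - my))) (A - B * D⁻¹ * Bᵀ) := by
  have hfac : ∀ u, jointGaussDensity mu my (fromBlocks A B Bᵀ D) (u, y) =
      gaussDensity my D y *
        gaussDensity (mu + B *ᵥ (D⁻¹ *ᵥ (y - my))) (A - B * D⁻¹ * Bᵀ) u := fun u => by
    have hdet := hD.det_pos
    simp only [jointGaussDensity, gaussDensity, det_fromBlocks_schur hD,
      dotProduct_inv_fromBlocks hD hS, mul_add, Real.exp_add, ← sub_sub]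
    rw [pow_add, show (2 * Real.pi) ^ d * (2 * Real.pi) ^ K * (D.det * (A - B * D⁻¹ * Bᵀ).det) =
      ((2 * Real.pi) ^ K * D.det) * ((2 * Real.pi) ^ d * (A - B * D⁻¹ * Bᵀ).det) by ring,
      Real.sqrt_mul (by positivity), mul_inv]
    ring
  have hpos : gaussDensity my D y ≠ 0 := by
    have hdet := hD.det_pos
    unfold gaussDensity
    positivity
  unfold condM gauss
  simp_rw [hfac, integral_const_mul, integral_gaussDensity _ hS, mul_one,
    mul_div_cancel_left₀ _ hpos]

/-- **Equivalence of the two formulations of the Gaussian projected filter** (Lemma A.5):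
`B G Q P μ = G T Q P μ`. -/
theorem gaussian_projected_filter_two_forms
    (d K : ℕ) (κΨ κH σ γ : ℝ) (hσ : 0 < σ) (hγ : 0 < γ)
    (Psi : Vec d → Vec d) (H : Vec d → Vec K)
    (hPsim : Measurable Psi) (hHm : Measurable H)
    (hPsib : ∀ v, enorm (Psi v) ≤ κΨ) (hHb : ∀ v, enorm (H v) ≤ κH)
    (Sig : Matrix (Fin d) (Fin d) ℝ) (Gam : Matrix (Fin K) (Fin K) ℝ)
    (hSig : loe (σ • 1) Sig) (hGam : loe (γ • 1) Gam)
    (ydag : Vec K) (μ : Measure (Vec d)) (hμ : IsProbabilityMeasure μ) :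
    condM (gProjDensity2 (Qop H Gam (Pop Psi Sig μ))) ydag =
      Gproj (Top ydag (Qop H Gam (Pop Psi Sig μ))) := by
  have hSp := posDef_of_loe hσ hSig
  have hGp := posDef_of_loe hγ hGam
  have := isProbabilityMeasure_Pop (ν := μ) hPsim hSp
  have := isProbabilityMeasure_Qop (ν := Pop Psi Sig μ) hHm hGp
  have hac : Qop H Gam (Pop Psi Sig μ) ≪ volume :=
    Qop_absolutelyContinuous (Pop_absolutelyContinuous hPsim hSp) hHm hGp
  have hu : ∀ i, MemLp (fun p : Vec d × Vec K => p.1 i) 2 (Qop H Gam (Pop Psi Sig μ)) :=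
    fun i => memLp_two_fst_Qop hHm hGp (memLp_two_Pop hPsim hPsib hSp i)
  have hy : ∀ j, MemLp (fun p : Vec d × Vec K => p.2 j) 2 (Qop H Gam (Pop Psi Sig μ)) :=
    memLp_two_snd_Qop hHm hHb hGp
  generalize Qop H Gam (Pop Psi Sig μ) = π at *
  have hD := posDef_covYY hac hy
  have : IsProbabilityMeasure (Top ydag π) := Measure.isProbabilityMeasure_map
    (measurable_transport (covUY π) (covYY π)⁻¹ ydag).aemeasurable
  have hT := posDef_cov (Top ydag π) (Top_absolutelyContinuous hac ydag) fun i => by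
    have hm : Measurable fun u : Vec d => u i := measurable_pi_apply i
    rw [Top, memLp_map_measure_iff hm.aestronglyMeasurable
      (measurable_transport _ _ ydag).aemeasurable]
    simp only [Function.comp_def, mulVec_mulVec, Pi.add_apply, mulVec, dotProduct, Pi.sub_apply]
    exact (hu i).add (memLp_finsetSum Finset.univ fun j _ =>
      ((memLp_const _).sub (hy j)).const_mul _)
  rw [Gproj, mean_Top hu hy, cov_Top hu hy hD]
  rw [cov_Top hu hy hD] at hT
  exact condM_jointGaussDensity hD hT _ _ _

end EnKF
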